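/- Let T > 0, let λ : (0,T] → (0,∞), Λ(t) := ∫₀ᵗ λ(s) ds, and define ρ(t,x,ξ) := (1 + (λ(t)²/Λ(t))·⟨x⟩⟨ξ⟩·ln(⟨x⟩⟨ξ⟩))^{1/2} for t ∈ (0,T], x, ξ ∈ ℝ^d. Then for every t ∈ (0,T], all x, ξ ∈ ℝ^d, and every coordinate index j, one has |∂_{x_j}ρ(t,x,ξ)| ≤ ρ(t,x,ξ)/⟨x⟩ and |∂_{ξ_j}ρ(t,x,ξ)| ≤ ρ(t,x,ξ)/⟨ξ⟩. -/

import Mathlib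

/-- `Λ(t) = ∫₀ᵗ λ(s) ds`. -/
noncomputable def Lam (lam : ℝ → ℝ) (t : ℝ) : ℝ := ∫ s in (0:ℝ)..t, lam s

/-- The weight `⟨y⟩ = (e + |y|²)^{1/2}`. -/
noncomputable def jw {d : ℕ} (y : EuclideanSpace ℝ (Fin d)) : ℝ :=
  Real.sqrt (Real.exp 1 + ‖y‖ ^ 2)

/-- The symbol `ρ(t,x,ξ) = (1 + (λ(t)²/Λ(t))·⟨x⟩⟨ξ⟩·ln(⟨x⟩⟨ξ⟩))^{1/2}`. -/
noncomputable def rho (lam : ℝ → ℝ) {d : ℕ} (t : ℝ)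
    (x ξ : EuclideanSpace ℝ (Fin d)) : ℝ :=
  Real.sqrt (1 + lam t ^ 2 / Lam lam t * (jw x * jw ξ) * Real.log (jw x * jw ξ))

/-!
As a function of `s = ⟨x⟩⟨ξ⟩`, the symbol is `ρ = φ(s)` with `φ(s) = (1 + c s ln s)^{1/2}` and
`c = λ(t)²/Λ(t)`. Since `s ≥ e`, we have `ln s + 1 ≤ 2 ln s`, so `s φ'(s) ≤ c s ln s / φ(s) ≤ φ(s)`.
The weight `⟨x⟩` has gradient of norm at most `1`, so the chain rule gives
`|∇ₓρ| ≤ φ'(s) ⟨ξ⟩ ≤ φ(s) ⟨ξ⟩ / s = ρ / ⟨x⟩`; the bound in `ξ` follows by symmetry.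
-/

section SqrtAddNormSq

variable {E : Type*} [NormedAddCommGroup E] [InnerProductSpace ℝ E] {a : ℝ}

theorem hasFDerivAt_sqrt_const_add_norm_sq (ha : 0 < a) (x : E) :
    HasFDerivAt (fun y : E => √(a + ‖y‖ ^ 2)) ((√(a + ‖x‖ ^ 2))⁻¹ • innerSL ℝ x) x := by
  have h := ((hasStrictFDerivAt_norm_sq x).hasFDerivAt.const_add a).sqrt (by positivity)
  refine h.congr_fderiv ?_
  rw [← Nat.cast_smul_eq_nsmul ℝ, smul_smul]
  congr 1
  push_cast
  field_simp

theorem norm_fderiv_sqrt_const_add_norm_sq_le_one (ha : 0 < a) (x : E) :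
    ‖fderiv ℝ (fun y : E => √(a + ‖y‖ ^ 2)) x‖ ≤ 1 := by
  have norm_le : ‖x‖ ≤ √(a + ‖x‖ ^ 2) := Real.le_sqrt_of_sq_le (by linarith)
  rw [(hasFDerivAt_sqrt_const_add_norm_sq ha x).fderiv, norm_smul, innerSL_apply_norm,
    Real.norm_of_nonneg (by positivity)]
  exact inv_mul_le_one_of_le₀ norm_le (Real.sqrt_nonneg _)

end SqrtAddNormSq

/-- The one-variable profile `φ(s) = (1 + c s ln s)^{1/2}` through which the symbol `ρ` depends on
`s = ⟨x⟩⟨ξ⟩`, with `c = λ(t)²/Λ(t)`. -/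
noncomputable def rhoProfile (c s : ℝ) : ℝ := √(1 + c * s * Real.log s)

section RhoProfile

variable {c s : ℝ}

theorem one_add_mul_mul_log_pos (hc : 0 ≤ c) (hs : 1 ≤ s) : 0 < 1 + c * s * Real.log s := by
  have := Real.log_nonneg hs
  positivity

theorem hasDerivAt_rhoProfile (hc : 0 ≤ c) (hs : 1 ≤ s) :
    HasDerivAt (rhoProfile c) (c * (Real.log s + 1) / (2 * rhoProfile c s)) s := by
  have s_ne : s ≠ 0 := by positivity
  have hmul : HasDerivAt (fun u => 1 + c * u * Real.log u) (c * (Real.log s + 1)) s := by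
    simpa only [mul_assoc] using ((Real.hasDerivAt_mul_log s_ne).const_mul c).const_add 1
  exact hmul.sqrt (one_add_mul_mul_log_pos hc hs).ne'

theorem abs_deriv_rhoProfile_le (hc : 0 ≤ c) (hs : Real.exp 1 ≤ s) :
    |deriv (rhoProfile c) s| ≤ rhoProfile c s / s := by
  have one_le : 1 ≤ s := (Real.one_le_exp zero_le_one).trans hs
  have s_pos : 0 < s := by positivity
  have one_le_log : 1 ≤ Real.log s := (Real.le_log_iff_exp_le s_pos).2 hs
  have arg_pos := one_add_mul_mul_log_pos hc one_le
  have profile_pos : 0 < rhoProfile c s := Real.sqrt_pos.2 arg_pos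
  have profile_sq : rhoProfile c s ^ 2 = 1 + c * s * Real.log s := Real.sq_sqrt arg_pos.le
  rw [(hasDerivAt_rhoProfile hc one_le).deriv, abs_of_nonneg (by positivity),
    div_le_div_iff₀ (by positivity) s_pos]
  calc c * (Real.log s + 1) * s
      ≤ c * (Real.log s + Real.log s) * s := by gcongr
    _ ≤ 2 * (1 + c * s * Real.log s) := by linarith
    _ = rhoProfile c s * (2 * rhoProfile c s) := by rw [← profile_sq]; ring

end RhoProfile

theorem Lam_nonneg {lam : ℝ → ℝ} {t : ℝ} (ht : 0 ≤ t) (hlam : ∀ s ∈ Set.Ioc 0 t, 0 ≤ lam s) :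
    0 ≤ Lam lam t := by
  rw [Lam, intervalIntegral.integral_of_le ht]
  exact MeasureTheory.setIntegral_nonneg measurableSet_Ioc hlam

section Symbol

variable {d : ℕ}

theorem jw_pos (y : EuclideanSpace ℝ (Fin d)) : 0 < jw y :=
  Real.sqrt_pos.2 (by positivity)

theorem differentiableAt_jw (y : EuclideanSpace ℝ (Fin d)) : DifferentiableAt ℝ jw y :=
  (hasFDerivAt_sqrt_const_add_norm_sq (Real.exp_pos 1) y).differentiableAt

theorem norm_fderiv_jw_le_one (y : EuclideanSpace ℝ (Fin d)) : ‖fderiv ℝ jw y‖ ≤ 1 :=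
  norm_fderiv_sqrt_const_add_norm_sq_le_one (Real.exp_pos 1) y

theorem exp_one_le_jw_mul_jw (x ξ : EuclideanSpace ℝ (Fin d)) : Real.exp 1 ≤ jw x * jw ξ := by
  have sqrt_le (y : EuclideanSpace ℝ (Fin d)) : √(Real.exp 1) ≤ jw y :=
    Real.sqrt_le_sqrt (le_add_of_nonneg_right (sq_nonneg ‖y‖))
  calc Real.exp 1 = √(Real.exp 1) * √(Real.exp 1) :=
        (Real.mul_self_sqrt (Real.exp_pos 1).le).symm
    _ ≤ jw x * jw ξ := mul_le_mul (sqrt_le x) (sqrt_le ξ) (Real.sqrt_nonneg _) (jw_pos x).le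

theorem rho_eq_rhoProfile (lam : ℝ → ℝ) (t : ℝ) (x ξ : EuclideanSpace ℝ (Fin d)) :
    rho lam t x ξ = rhoProfile (lam t ^ 2 / Lam lam t) (jw x * jw ξ) := rfl

theorem rho_comm (lam : ℝ → ℝ) (t : ℝ) (x ξ : EuclideanSpace ℝ (Fin d)) :
    rho lam t x ξ = rho lam t ξ x := by
  simp only [rho_eq_rhoProfile, mul_comm (jw x)]

variable {lam : ℝ → ℝ} {t : ℝ}

theorem hasFDerivAt_rho_left (hLam : 0 ≤ Lam lam t) (x ξ : EuclideanSpace ℝ (Fin d)) :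
    HasFDerivAt (fun x' => rho lam t x' ξ)
      (deriv (rhoProfile (lam t ^ 2 / Lam lam t)) (jw x * jw ξ) • jw ξ • fderiv ℝ jw x) x := by
  have one_le : 1 ≤ jw x * jw ξ :=
    (Real.one_le_exp zero_le_one).trans (exp_one_le_jw_mul_jw x ξ)
  have hprofile := (hasDerivAt_rhoProfile (c := lam t ^ 2 / Lam lam t) (by positivity)
    one_le).differentiableAt.hasDerivAt
  have hprod := (differentiableAt_jw x).hasFDerivAt.mul_const (jw ξ)
  exact (hprofile.comp_hasFDerivAt x hprod :)

theorem norm_fderiv_rho_left_le (hLam : 0 ≤ Lam lam t) (x ξ : EuclideanSpace ℝ (Fin d)) :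
    ‖fderiv ℝ (fun x' => rho lam t x' ξ) x‖ ≤ rho lam t x ξ / jw x := by
  have hx := jw_pos x
  have hξ := jw_pos ξ
  have deriv_le := abs_deriv_rhoProfile_le (c := lam t ^ 2 / Lam lam t) (by positivity)
    (exp_one_le_jw_mul_jw x ξ)
  rw [← rho_eq_rhoProfile] at deriv_le
  rw [(hasFDerivAt_rho_left hLam x ξ).fderiv, norm_smul, norm_smul, Real.norm_eq_abs,
    Real.norm_of_nonneg hξ.le]
  calc |deriv (rhoProfile (lam t ^ 2 / Lam lam t)) (jw x * jw ξ)| * (jw ξ * ‖fderiv ℝ jw x‖)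
      ≤ rho lam t x ξ / (jw x * jw ξ) * (jw ξ * 1) := by
        gcongr
        · exact div_nonneg (Real.sqrt_nonneg _) (by positivity)
        · exact norm_fderiv_jw_le_one x
    _ = rho lam t x ξ / jw x := by field_simp

-- The case `Λ(t) = 0` is included because `Lam lam t` is `0` when `lam` is not integrable on
-- `(0, t]`.
theorem rho_first_order_derivative_estimates_general (hLam : 0 ≤ Lam lam t)
    (x ξ : EuclideanSpace ℝ (Fin d)) :
    ‖fderiv ℝ (fun x' => rho lam t x' ξ) x‖ ≤ rho lam t x ξ / jw x ∧
      ‖fderiv ℝ (fun ξ' => rho lam t x ξ') ξ‖ ≤ rho lam t x ξ / jw ξ := by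
  refine ⟨norm_fderiv_rho_left_le hLam x ξ, ?_⟩
  simpa only [rho_comm lam t x] using norm_fderiv_rho_left_le hLam ξ x

end Symbol

/-- From the proof of Lemma 4.1 of the paper: first-order partial derivative bounds
`|∂_{x_j}ρ| ≤ ρ/⟨x⟩` and `|∂_{ξ_j}ρ| ≤ ρ/⟨ξ⟩`. -/
theorem rho_first_order_derivative_estimates
    (d : ℕ) (T : ℝ) (hT : 0 < T) (lam : ℝ → ℝ)
    (hpos : ∀ t ∈ Set.Ioc 0 T, 0 < lam t) :
    ∀ t ∈ Set.Ioc 0 T, ∀ x ξ : EuclideanSpace ℝ (Fin d), ∀ j : Fin d,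
      |fderiv ℝ (fun x' => rho lam t x' ξ) x (EuclideanSpace.single j 1)| ≤
          rho lam t x ξ / jw x ∧
      |fderiv ℝ (fun ξ' => rho lam t x ξ') ξ (EuclideanSpace.single j 1)| ≤
          rho lam t x ξ / jw ξ := by
  intro t ht x ξ j
  have hLam : 0 ≤ Lam lam t :=
    Lam_nonneg ht.1.le fun s hs => (hpos s ⟨hs.1, hs.2.trans ht.2⟩).le
  have hj : ‖EuclideanSpace.single j (1 : ℝ)‖ ≤ 1 := by simp
  exact (rho_first_order_derivative_estimates_general hLam x ξ).imp
    (ContinuousLinearMap.unit_le_opNorm _ _ hj).trans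
    (ContinuousLinearMap.unit_le_opNorm _ _ hj).trans
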